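/- Let p > 1 and a, b, L > 0, and let u and v be two C¹ weak solutions of −Δ^{a,b}_p w = λ^{a,b}_{1,p}(0,L) |w|^{p−2} w on (0,L) with w(0) = w(L) = 0, both positive on (0,L). Then there exists a constant c > 0 such that v = c·u; in particular, if ∫₀^L |u|^p dt = ∫₀^L |v|^p dt = 1, then u = v. -/

import Mathlib

open Set

/-- `u` is C¹ on `[α, γ]` with derivative `u'` there. -/
def C1On (α γ : ℝ) (u u' : ℝ → ℝ) : Prop :=
  (∀ t ∈ Set.Icc α γ, HasDerivWithinAt u (u' t) (Set.Icc α γ) t) ∧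
  ContinuousOn u' (Set.Icc α γ)

/-- Admissible functions on `[0, L]`: C¹ with zero boundary values. -/
def Adm (L : ℝ) (u u' : ℝ → ℝ) : Prop :=
  C1On 0 L u u' ∧ u 0 = 0 ∧ u L = 0

/-- The asymmetric energy integrand `a^p (s⁺)^p + b^p (s⁻)^p`. -/
noncomputable def asymE (p a b s : ℝ) : ℝ :=
  a ^ p * (max s 0) ^ p + b ^ p * (max (-s) 0) ^ p

/-- The asymmetric flux `a^p (s⁺)^(p-1) - b^p (s⁻)^(p-1)`. -/
noncomputable def asymFlux (p a b s : ℝ) : ℝ :=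
  a ^ p * (max s 0) ^ (p - 1) - b ^ p * (max (-s) 0) ^ (p - 1)

/-- The first Dirichlet eigenvalue `λ^{a,b}_{1,p}(0,L)`, as the infimum of the
asymmetric energy over normalized admissible functions. -/
noncomputable def lam1 (p a b L : ℝ) : ℝ :=
  sInf { E : ℝ | ∃ u u' : ℝ → ℝ, Adm L u u' ∧
    (∫ t in (0:ℝ)..L, |u t| ^ p) = 1 ∧
    E = ∫ t in (0:ℝ)..L, asymE p a b (u' t) }

/-- `u` (a C¹ function on `[0,L]` with derivative `u'` and zero boundary values)
is a weak solution of `-Δ^{a,b}_p u = g` on `(0,L)`. -/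
def IsWeakSol (p a b L : ℝ) (u u' g : ℝ → ℝ) : Prop :=
  Adm L u u' ∧
  ∀ φ φ' : ℝ → ℝ, Adm L φ φ' →
    (∫ t in (0:ℝ)..L, asymFlux p a b (u' t) * φ' t) =
      ∫ t in (0:ℝ)..L, g t * φ t

/-
The positive solutions are compared through Picone's function
`F = u (Φ(u') - Φ((u / v) v'))`, where `Φ` is the asymmetric flux. The energy `E` is strictly convex
with `E' = p Φ`, and if `u`, `v` solve the equation with eigenvalues `l`, `μ`, then
`F' = D(u', (u / v) v') + (μ - l) u ^ p`, where `D ≥ 0` is the Bregman divergence of `E`.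
By Hopf's lemma `u / v` stays bounded at the endpoints, so `F` vanishes there. Hence `F` cannot be
strictly increasing, which gives `μ ≤ l` and by symmetry `l = μ`; and then `F`, being monotone, is
identically zero. As `Φ` is injective, `u' = (u / v) v'`: the logarithmic derivatives of `u` and `v`
agree.
-/

open Filter Topology MeasureTheory

/-- The Bregman divergence of the energy `asymE`, that is, `E(x)` minus the tangent of `E` at `y`,
whose slope is `p * asymFlux p a b y`. It is the nonnegative term in Picone's identity. -/
noncomputable def asymBregman (p a b x y : ℝ) : ℝ :=
  asymE p a b x - asymE p a b y - p * asymFlux p a b y * (x - y)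

/-- Picone's function of a pair of functions `u`, `v` with derivatives `u'`, `v'`. Where `v = 0` the
quotient is `0`, which is harmless when `u` vanishes there as well. -/
noncomputable def piconeFun (p a b : ℝ) (u u' v v' : ℝ → ℝ) (t : ℝ) : ℝ :=
  u t * (asymFlux p a b (u' t) - asymFlux p a b (u t / v t * v' t))

/-- `u` is a positive Dirichlet eigenfunction of `-Δ^{a,b}_p` on `(0, L)` with eigenvalue `l`. -/
structure IsPosEigenfunction (p a b L l : ℝ) (u u' : ℝ → ℝ) : Prop where
  isWeakSol : IsWeakSol p a b L u u' (fun t => l * |u t| ^ (p - 2) * u t)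
  pos : ∀ t ∈ Ioo (0 : ℝ) L, 0 < u t

section Integrand

variable {p a b s x y : ℝ}

lemma asymE_neg : asymE p a b (-s) = asymE p b a s := by
  rw [asymE, asymE, neg_neg, add_comm]

lemma asymFlux_neg : asymFlux p a b (-s) = -asymFlux p b a s := by
  rw [asymFlux, asymFlux, neg_neg, neg_sub]

lemma asymE_of_nonneg (hp : p ≠ 0) (hs : 0 ≤ s) : asymE p a b s = a ^ p * s ^ p := by
  rw [asymE, max_eq_left hs, max_eq_right (neg_nonpos.2 hs), Real.zero_rpow hp, mul_zero, add_zero]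

lemma asymFlux_of_nonneg (hp : p ≠ 1) (hs : 0 ≤ s) :
    asymFlux p a b s = a ^ p * s ^ (p - 1) := by
  rw [asymFlux, max_eq_left hs, max_eq_right (neg_nonpos.2 hs),
    Real.zero_rpow (sub_ne_zero.2 hp), mul_zero, sub_zero]

lemma asymE_nonneg (ha : 0 ≤ a) (hb : 0 ≤ b) : 0 ≤ asymE p a b s := by
  unfold asymE
  positivity

lemma asymE_pos (hp : p ≠ 0) (ha : 0 < a) (hb : 0 < b) (hs : s ≠ 0) : 0 < asymE p a b s := by
  rcases hs.lt_or_gt with hs | hs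
  · rw [← neg_neg s, asymE_neg, asymE_of_nonneg hp (neg_pos.2 hs).le]
    have := neg_pos.2 hs
    positivity
  · rw [asymE_of_nonneg hp hs.le]
    positivity

lemma asymE_eq_mul_asymFlux (hp₀ : p ≠ 0) (hp₁ : p ≠ 1) :
    asymE p a b s = s * asymFlux p a b s := by
  have of_nonneg {a b s : ℝ} (hs : 0 ≤ s) : asymE p a b s = s * asymFlux p a b s := by
    rw [asymE_of_nonneg hp₀ hs, asymFlux_of_nonneg hp₁ hs, mul_left_comm,
      ← Real.rpow_one_add' hs (by simpa using hp₀), add_sub_cancel]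
  rcases le_total 0 s with hs | hs
  · exact of_nonneg hs
  · rw [← neg_neg s, asymE_neg, asymFlux_neg, of_nonneg (neg_nonneg.2 hs), neg_mul_neg]

lemma continuous_asymFlux (hp : 1 ≤ p) : Continuous (asymFlux p a b) := by
  have hp' : 0 ≤ p - 1 := sub_nonneg.2 hp
  unfold asymFlux
  fun_prop (disch := exact Or.inr hp')

lemma asymFlux_mul_of_nonneg (hx : 0 ≤ x) :
    asymFlux p a b (x * s) = x ^ (p - 1) * asymFlux p a b s := by
  have max_mul (z : ℝ) : max (x * z) 0 = x * max z 0 := by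
    rw [mul_max_of_nonneg _ _ hx, mul_zero]
  rw [asymFlux, ← mul_neg, max_mul, max_mul, Real.mul_rpow hx (le_max_right _ _),
    Real.mul_rpow hx (le_max_right _ _), asymFlux]
  ring

lemma asymBregman_neg : asymBregman p a b (-x) (-y) = asymBregman p b a x y := by
  rw [asymBregman, asymBregman, asymE_neg, asymE_neg, asymFlux_neg]
  ring

lemma asymBregman_self : asymBregman p a b x x = 0 := by
  simp only [asymBregman, sub_self, mul_zero]

lemma asymBregman_pos_of_pos (hp : 1 < p) (ha : 0 < a) (hb : 0 ≤ b) (hy : 0 < y) (hxy : x ≠ y) :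
    0 < asymBregman p a b x y := by
  have hp₀ : 0 < p := one_pos.trans hp
  have energy_eq : asymE p a b y = y * asymFlux p a b y := asymE_eq_mul_asymFlux hp₀.ne' hp.ne'
  have flux_pos : 0 < asymFlux p a b y := by
    rw [asymFlux_of_nonneg hp.ne' hy.le]
    positivity
  rcases le_or_gt x 0 with hx | hx
  · have energy_nonneg : 0 ≤ asymE p a b x := asymE_nonneg ha.le hb
    have cross_nonneg : 0 ≤ p * asymFlux p a b y * -x :=
      mul_nonneg (mul_pos hp₀ flux_pos).le (neg_nonneg.2 hx)
    have diag_pos : 0 < (p - 1) * (y * asymFlux p a b y) :=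
      mul_pos (sub_pos.2 hp) (mul_pos hy flux_pos)
    rw [asymBregman, energy_eq]
    linarith
  · have bernoulli : 1 + p * (x / y - 1) < (x / y) ^ p := by
      have := one_add_mul_self_lt_rpow_one_add (s := x / y - 1)
        (by linarith [div_pos hx hy]) (sub_ne_zero.2 (by rwa [Ne, div_eq_one_iff_eq hy.ne'])) hp
      rwa [add_sub_cancel] at this
    have factored : asymBregman p a b x y
        = a ^ p * y ^ p * ((x / y) ^ p - (1 + p * (x / y - 1))) := by
      rw [asymBregman, asymE_of_nonneg hp₀.ne' hx.le, asymE_of_nonneg hp₀.ne' hy.le,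
        asymFlux_of_nonneg hp.ne' hy.le, Real.div_rpow hx.le hy.le, Real.rpow_sub_one hy.ne']
      field_simp
      ring
    rw [factored]
    exact mul_pos (by positivity) (sub_pos.2 bernoulli)

lemma asymBregman_pos (hp : 1 < p) (ha : 0 < a) (hb : 0 < b) (hxy : x ≠ y) :
    0 < asymBregman p a b x y := by
  rcases lt_trichotomy y 0 with hy | rfl | hy
  · rw [← neg_neg x, ← neg_neg y, asymBregman_neg]
    exact asymBregman_pos_of_pos hp hb ha.le (neg_pos.2 hy) (neg_injective.ne hxy)
  · have hp₀ : p ≠ 0 := (one_pos.trans hp).ne'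
    have : asymBregman p a b x 0 = asymE p a b x := by
      rw [asymBregman, asymE_of_nonneg hp₀ le_rfl, asymFlux_of_nonneg hp.ne' le_rfl,
        Real.zero_rpow hp₀, Real.zero_rpow (sub_ne_zero.2 hp.ne')]
      ring
    rw [this]
    exact asymE_pos hp₀ ha hb hxy
  · exact asymBregman_pos_of_pos hp ha hb.le hy hxy

lemma asymBregman_nonneg (hp : 1 < p) (ha : 0 < a) (hb : 0 < b) : 0 ≤ asymBregman p a b x y := by
  rcases eq_or_ne x y with rfl | hxy
  · exact asymBregman_self.ge
  · exact (asymBregman_pos hp ha hb hxy).le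

lemma strictMono_asymFlux (hp : 1 < p) (ha : 0 < a) (hb : 0 < b) :
    StrictMono (asymFlux p a b) := by
  intro x y hxy
  have symmetrized : asymBregman p a b x y + asymBregman p a b y x
      = p * (y - x) * (asymFlux p a b y - asymFlux p a b x) := by
    simp only [asymBregman]
    ring
  have : 0 < p * (y - x) * (asymFlux p a b y - asymFlux p a b x) := by
    rw [← symmetrized]
    exact add_pos (asymBregman_pos hp ha hb hxy.ne) (asymBregman_pos hp ha hb hxy.ne')
  exact sub_pos.1 (pos_of_mul_pos_right this
    (mul_nonneg (one_pos.trans hp).le (sub_nonneg.2 hxy.le)))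

end Integrand

section Calculus

lemma tendsto_div_of_hasDerivWithinAt {f g : ℝ → ℝ} {f' g' x : ℝ} {s : Set ℝ}
    (hf : HasDerivWithinAt f f' s x) (hg : HasDerivWithinAt g g' s x)
    (hfx : f x = 0) (hgx : g x = 0) (hg' : g' ≠ 0) :
    Tendsto (fun t => f t / g t) (𝓝[s \ {x}] x) (𝓝 (f' / g')) := by
  refine ((hasDerivWithinAt_iff_tendsto_slope.1 hf).div
    (hasDerivWithinAt_iff_tendsto_slope.1 hg) hg').congr' ?_
  filter_upwards [self_mem_nhdsWithin] with t ht
  have htx : t - x ≠ 0 := sub_ne_zero.2 ht.2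
  simp only [Pi.div_apply, slope_def_field, hfx, hgx, sub_zero, div_div_div_cancel_right₀ htx]

lemma integral_abs_rpow_of_eq_const_mul {α γ p c : ℝ} {u v : ℝ → ℝ} (hc : 0 ≤ c)
    (h : ∀ t ∈ uIcc α γ, v t = c * u t) :
    ∫ t in α..γ, |v t| ^ p = c ^ p * ∫ t in α..γ, |u t| ^ p := by
  rw [← intervalIntegral.integral_const_mul]
  refine intervalIntegral.integral_congr fun t ht => ?_
  simp only [h t ht, abs_mul, abs_of_nonneg hc, Real.mul_rpow hc (abs_nonneg _)]

variable {α γ : ℝ} {f f' : ℝ → ℝ}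

namespace C1On

lemma continuousOn (hf : C1On α γ f f') : ContinuousOn f (Icc α γ) :=
  fun t ht => (hf.1 t ht).continuousWithinAt

lemma hasDerivAt (hf : C1On α γ f f') {t : ℝ} (ht : t ∈ Ioo α γ) : HasDerivAt f (f' t) t :=
  (hf.1 t (Ioo_subset_Icc_self ht)).hasDerivAt (Icc_mem_nhds ht.1 ht.2)

lemma neg (hf : C1On α γ f f') : C1On α γ (-f) (-f') :=
  ⟨fun t ht => (hf.1 t ht).neg, hf.2.neg⟩

lemma exists_deriv_eq_slope (hf : C1On α γ f f') {x y : ℝ} (hαx : α ≤ x) (hxy : x < y)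
    (hyγ : y ≤ γ) : ∃ c ∈ Ioo x y, f' c = (f y - f x) / (y - x) :=
  exists_hasDerivAt_eq_slope f f' hxy (hf.continuousOn.mono (Icc_subset_Icc hαx hyγ))
    fun _ ht => hf.hasDerivAt (Ioo_subset_Ioo hαx hyγ ht)

lemma antitoneOn (hf : C1On α γ f f') (hf' : ∀ t ∈ Ioo α γ, f' t ≤ 0) :
    AntitoneOn f (Icc α γ) := by
  refine antitoneOn_of_hasDerivWithinAt_nonpos (f' := f') (convex_Icc α γ) hf.continuousOn ?_ ?_ <;>
    rw [interior_Icc]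
  · exact fun t ht => (hf.hasDerivAt ht).hasDerivWithinAt
  · exact hf'

lemma primitive {g : ℝ → ℝ} (hg : ContinuousOn g (Icc α γ)) :
    C1On α γ (fun t => ∫ s in α..t, g s) g := by
  refine ⟨fun t ht => ?_, hg⟩
  have : Fact (t ∈ Icc α γ) := ⟨ht⟩
  have integrable : IntervalIntegrable g volume α t :=
    (hg.mono (Icc_subset_Icc_right ht.2)).intervalIntegrable_of_Icc ht.1
  exact intervalIntegral.integral_hasDerivWithinAt_right integrable
    (hg.stronglyMeasurableAtFilter_nhdsWithin measurableSet_Icc t) (hg t ht)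

end C1On

end Calculus

section DuBoisReymond

variable {L : ℝ} {f g : ℝ → ℝ}

lemma exists_eq_const_of_integral_mul_deriv_eq_zero (hL : 0 < L) (hf : ContinuousOn f (Icc 0 L))
    (h : ∀ φ φ' : ℝ → ℝ, Adm L φ φ' → ∫ t in (0 : ℝ)..L, f t * φ' t = 0) :
    ∃ m, ∀ t ∈ Icc 0 L, f t = m := by
  have hfi : IntervalIntegrable f volume 0 L := hf.intervalIntegrable_of_Icc hL.le
  set m : ℝ := (∫ t in (0 : ℝ)..L, f t) / L with hm
  set d : ℝ → ℝ := fun t => f t - m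
  have hdc : ContinuousOn d (Icc 0 L) := hf.sub continuousOn_const
  have integral_d : ∫ t in (0 : ℝ)..L, d t = 0 := by
    rw [intervalIntegral.integral_sub hfi intervalIntegrable_const,
      intervalIntegral.integral_const, sub_zero, smul_eq_mul, hm, mul_div_cancel₀ _ hL.ne',
      sub_self]
  have integral_f_mul_d : ∫ t in (0 : ℝ)..L, f t * d t = 0 :=
    h _ d ⟨C1On.primitive hdc, intervalIntegral.integral_same, integral_d⟩
  have integral_sq : ∫ t in (0 : ℝ)..L, d t ^ 2 = 0 := by
    have expand (t : ℝ) : d t ^ 2 = f t * d t - m * d t := by rw [sq, ← sub_mul]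
    simp only [expand]
    rw [intervalIntegral.integral_sub ((hf.fun_mul hdc).intervalIntegrable_of_Icc hL.le)
      ((hdc.const_mul m).intervalIntegrable_of_Icc hL.le), integral_f_mul_d,
      intervalIntegral.integral_const_mul, integral_d, mul_zero, sub_zero]
  refine ⟨m, fun t ht => by_contra fun hne => ?_⟩
  exact (intervalIntegral.integral_pos hL (hdc.pow 2) (fun _ _ => sq_nonneg _)
    ⟨t, ht, sq_pos_of_ne_zero (sub_ne_zero.2 hne)⟩).ne' integral_sq

lemma c1On_neg_of_integral_mul_deriv_eq (hL : 0 < L) (hf : ContinuousOn f (Icc 0 L))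
    (hg : ContinuousOn g (Icc 0 L))
    (h : ∀ φ φ' : ℝ → ℝ, Adm L φ φ' →
      ∫ t in (0 : ℝ)..L, f t * φ' t = ∫ t in (0 : ℝ)..L, g t * φ t) :
    C1On 0 L f (-g) := by
  set G : ℝ → ℝ := fun t => ∫ s in (0 : ℝ)..t, g s
  have hG : C1On 0 L G g := C1On.primitive hg
  have by_parts (φ φ' : ℝ → ℝ) (hφ : Adm L φ φ') :
      ∫ t in (0 : ℝ)..L, G t * φ' t = -∫ t in (0 : ℝ)..L, g t * φ t := by
    obtain ⟨hφ, hφ0, hφL⟩ := hφ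
    rw [intervalIntegral.integral_mul_deriv_eq_deriv_mul_of_hasDerivWithinAt
      (uIcc_of_le hL.le ▸ hG.1) (uIcc_of_le hL.le ▸ hφ.1) (hg.intervalIntegrable_of_Icc hL.le)
      (hφ.2.intervalIntegrable_of_Icc hL.le), hφ0, hφL]
    ring
  obtain ⟨m, hm⟩ : ∃ m, ∀ t ∈ Icc 0 L, f t + G t = m := by
    refine exists_eq_const_of_integral_mul_deriv_eq_zero hL (hf.add hG.continuousOn) ?_
    intro φ φ' hφ
    simp only [add_mul]
    rw [intervalIntegral.integral_add ((hf.fun_mul hφ.1.2).intervalIntegrable_of_Icc hL.le)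
      ((hG.continuousOn.fun_mul hφ.1.2).intervalIntegrable_of_Icc hL.le), h φ φ' hφ,
      by_parts φ φ' hφ, add_neg_cancel]
  have hf_eq : ∀ t ∈ Icc 0 L, f t = m - G t := fun t ht => eq_sub_of_add_eq (hm t ht)
  exact ⟨fun t ht => ((hG.1 t ht).const_sub m).congr hf_eq (hf_eq t ht), hg.neg⟩

end DuBoisReymond

namespace IsPosEigenfunction

variable {p a b L l : ℝ} {u u' : ℝ → ℝ}

lemma c1On (hu : IsPosEigenfunction p a b L l u u') : C1On 0 L u u' := hu.isWeakSol.1.1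

lemma apply_zero (hu : IsPosEigenfunction p a b L l u u') : u 0 = 0 := hu.isWeakSol.1.2.1

lemma apply_right (hu : IsPosEigenfunction p a b L l u u') : u L = 0 := hu.isWeakSol.1.2.2

lemma nonneg (hu : IsPosEigenfunction p a b L l u u') : ∀ t ∈ Icc 0 L, 0 ≤ u t := by
  rintro t ⟨ht0, htL⟩
  rcases ht0.eq_or_lt with rfl | ht0
  · exact hu.apply_zero.ge
  rcases htL.eq_or_lt with rfl | htL
  · exact hu.apply_right.ge
  exact (hu.pos t ⟨ht0, htL⟩).le

lemma c1On_asymFlux (hp : 1 < p) (hL : 0 < L) (hu : IsPosEigenfunction p a b L l u u') :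
    C1On 0 L (fun t => asymFlux p a b (u' t)) (-fun t => l * u t ^ (p - 1)) := by
  refine c1On_neg_of_integral_mul_deriv_eq hL
    ((continuous_asymFlux hp.le).comp_continuousOn hu.c1On.2)
    (continuousOn_const.mul (hu.c1On.continuousOn.rpow_const fun _ _ =>
      Or.inr (sub_nonneg.2 hp.le))) fun φ φ' hφ => ?_
  rw [hu.isWeakSol.2 φ φ' hφ]
  refine intervalIntegral.integral_congr fun t ht => ?_
  rw [uIcc_of_le hL.le] at ht
  have rpow_eq : |u t| ^ (p - 2) * u t = u t ^ (p - 1) := by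
    rw [abs_of_nonneg (hu.nonneg t ht),
      ← Real.rpow_add_one' (hu.nonneg t ht) (by linarith)]
    ring_nf
  simp only [mul_assoc l, rpow_eq]

lemma exists_deriv_pos_and_deriv_neg (hL : 0 < L) (hu : IsPosEigenfunction p a b L l u u') :
    ∃ c ∈ Ioo 0 L, ∃ d ∈ Ioo 0 L, c < d ∧ 0 < u' c ∧ u' d < 0 := by
  have hmid : 0 < u (L / 2) := hu.pos _ ⟨half_pos hL, half_lt_self hL⟩
  obtain ⟨c, hc, hc'⟩ := hu.c1On.exists_deriv_eq_slope le_rfl (half_pos hL) (half_le_self hL.le)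
  obtain ⟨d, hd, hd'⟩ := hu.c1On.exists_deriv_eq_slope (half_pos hL).le (half_lt_self hL) le_rfl
  refine ⟨c, ⟨hc.1, hc.2.trans (half_lt_self hL)⟩, d, ⟨(half_pos hL).trans hd.1, hd.2⟩,
    hc.2.trans hd.1, ?_, ?_⟩
  · rw [hc', hu.apply_zero, sub_zero, sub_zero]
    exact div_pos hmid (half_pos hL)
  · rw [hd', hu.apply_right, zero_sub]
    exact div_neg_of_neg_of_pos (neg_neg_of_pos hmid) (sub_pos.2 (half_lt_self hL))

lemma eigenvalue_nonneg (hp : 1 < p) (ha : 0 < a) (hb : 0 < b) (hL : 0 < L)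
    (hu : IsPosEigenfunction p a b L l u u') : 0 ≤ l := by
  by_contra! hl
  obtain ⟨c, hc, d, hd, hcd, hu'c, hu'd⟩ := hu.exists_deriv_pos_and_deriv_neg hL
  have neg_flux_antitone : AntitoneOn (-fun t => asymFlux p a b (u' t)) (Icc 0 L) := by
    refine (hu.c1On_asymFlux hp hL).neg.antitoneOn fun t ht => ?_
    simpa using mul_nonpos_of_nonpos_of_nonneg hl.le
      (Real.rpow_nonneg (hu.nonneg t (Ioo_subset_Icc_self ht)) (p - 1))
  have : asymFlux p a b (u' c) ≤ asymFlux p a b (u' d) := neg_le_neg_iff.1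
    (neg_flux_antitone (Ioo_subset_Icc_self hc) (Ioo_subset_Icc_self hd) hcd.le)
  exact (hu'd.trans hu'c).not_ge ((strictMono_asymFlux hp ha hb).le_iff_le.1 this)

lemma antitoneOn_deriv (hp : 1 < p) (ha : 0 < a) (hb : 0 < b) (hL : 0 < L)
    (hu : IsPosEigenfunction p a b L l u u') : AntitoneOn u' (Icc 0 L) := by
  have flux_antitone : AntitoneOn (fun t => asymFlux p a b (u' t)) (Icc 0 L) :=
    (hu.c1On_asymFlux hp hL).antitoneOn fun t ht => neg_nonpos.2 <|
      mul_nonneg (hu.eigenvalue_nonneg hp ha hb hL) (Real.rpow_nonneg (hu.pos t ht).le _)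
  exact fun s hs t ht hst => (strictMono_asymFlux hp ha hb).le_iff_le.1 (flux_antitone hs ht hst)

lemma deriv_zero_pos (hp : 1 < p) (ha : 0 < a) (hb : 0 < b) (hL : 0 < L)
    (hu : IsPosEigenfunction p a b L l u u') : 0 < u' 0 := by
  obtain ⟨c, hc, -, -, -, hu'c, -⟩ := hu.exists_deriv_pos_and_deriv_neg hL
  exact hu'c.trans_le (hu.antitoneOn_deriv hp ha hb hL (left_mem_Icc.2 hL.le)
    (Ioo_subset_Icc_self hc) hc.1.le)

lemma deriv_right_neg (hp : 1 < p) (ha : 0 < a) (hb : 0 < b) (hL : 0 < L)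
    (hu : IsPosEigenfunction p a b L l u u') : u' L < 0 := by
  obtain ⟨-, -, d, hd, -, -, hu'd⟩ := hu.exists_deriv_pos_and_deriv_neg hL
  exact (hu.antitoneOn_deriv hp ha hb hL (Ioo_subset_Icc_self hd)
    (right_mem_Icc.2 hL.le) hd.2.le).trans_lt hu'd

end IsPosEigenfunction

section Picone

variable {p a b L l μ : ℝ} {u u' v v' : ℝ → ℝ}

lemma continuousWithinAt_piconeFun_of_eq_zero {s : Set ℝ} {e : ℝ} (hp : 1 ≤ p)
    (hu : HasDerivWithinAt u (u' e) s e) (hv : HasDerivWithinAt v (v' e) s e)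
    (hu' : ContinuousWithinAt u' s e) (hv' : ContinuousWithinAt v' s e)
    (hue : u e = 0) (hve : v e = 0) (hv'e : v' e ≠ 0) :
    ContinuousWithinAt (piconeFun p a b u u' v v') s e := by
  rw [← continuousWithinAt_sdiff_self]
  have hflux : Continuous (asymFlux p a b) := continuous_asymFlux hp
  have restrict {f : ℝ → ℝ} (hf : ContinuousWithinAt f s e) :
      Tendsto f (𝓝[s \ {e}] e) (𝓝 (f e)) := hf.mono sdiff_subset
  have flux_scaled := (hflux.tendsto _).comp
    ((tendsto_div_of_hasDerivWithinAt hu hv hue hve hv'e).mul (restrict hv'))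
  have := (restrict hu.continuousWithinAt).mul
    (((hflux.tendsto _).comp (restrict hu')).sub flux_scaled)
  rw [hue, zero_mul] at this
  rw [ContinuousWithinAt, piconeFun, hue, zero_mul]
  exact this

lemma continuousOn_piconeFun (hp : 1 < p) (ha : 0 < a) (hb : 0 < b) (hL : 0 < L)
    (hu : IsPosEigenfunction p a b L l u u') (hv : IsPosEigenfunction p a b L μ v v') :
    ContinuousOn (piconeFun p a b u u' v v') (Icc 0 L) := by
  have at_zero {e : ℝ} (he : e ∈ Icc 0 L) (hue : u e = 0) (hve : v e = 0) (hv'e : v' e ≠ 0) :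
      ContinuousWithinAt (piconeFun p a b u u' v v') (Icc 0 L) e :=
    continuousWithinAt_piconeFun_of_eq_zero hp.le (hu.c1On.1 e he) (hv.c1On.1 e he)
      (hu.c1On.2 e he) (hv.c1On.2 e he) hue hve hv'e
  intro t ht
  rcases ht.1.eq_or_lt with rfl | ht0
  · exact at_zero ht hu.apply_zero hv.apply_zero (hv.deriv_zero_pos hp ha hb hL).ne'
  rcases ht.2.eq_or_lt with rfl | htL
  · exact at_zero ht hu.apply_right hv.apply_right (hv.deriv_right_neg hp ha hb hL).ne
  have hflux : Continuous (asymFlux p a b) := continuous_asymFlux hp.le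
  have ratio := (hu.c1On.continuousOn t ht).div (hv.c1On.continuousOn t ht)
    (hv.pos t ⟨ht0, htL⟩).ne'
  exact (hu.c1On.continuousOn t ht).mul
    ((hflux.continuousAt.comp_continuousWithinAt (hu.c1On.2 t ht)).sub
      (hflux.continuousAt.comp_continuousWithinAt (ratio.mul (hv.c1On.2 t ht))))

lemma hasDerivAt_piconeFun (hp : 1 < p) (hL : 0 < L)
    (hu : IsPosEigenfunction p a b L l u u') (hv : IsPosEigenfunction p a b L μ v v')
    {t : ℝ} (ht : t ∈ Ioo 0 L) :
    HasDerivAt (piconeFun p a b u u' v v')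
      (asymBregman p a b (u' t) (u t / v t * v' t) + (μ - l) * u t ^ p) t := by
  have hut := hu.pos t ht
  have hvt := hv.pos t ht
  have hr : 0 < u t / v t := div_pos hut hvt
  have factored : piconeFun p a b u u' v v' =ᶠ[𝓝 t] fun s => u s *
      (asymFlux p a b (u' s) - (u s / v s) ^ (p - 1) * asymFlux p a b (v' s)) := by
    filter_upwards [Ioo_mem_nhds ht.1 ht.2] with s hs
    rw [piconeFun, asymFlux_mul_of_nonneg (div_pos (hu.pos s hs) (hv.pos s hs)).le]
  have ratio_deriv : HasDerivAt (fun s => u s / v s) ((u' t - u t / v t * v' t) / v t) t := by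
    refine ((hu.c1On.hasDerivAt ht).div (hv.c1On.hasDerivAt ht) hvt.ne').congr_deriv ?_
    field_simp
  have product_deriv := (hu.c1On.hasDerivAt ht).mul
    (((hu.c1On_asymFlux hp hL).hasDerivAt ht).sub
      ((ratio_deriv.rpow_const (p := p - 1) (Or.inl hr.ne')).mul
        ((hv.c1On_asymFlux hp hL).hasDerivAt ht)))
  refine (product_deriv.congr_of_eventuallyEq factored).congr_deriv ?_
  have hp₀ : p ≠ 0 := (one_pos.trans hp).ne'
  simp only [asymBregman, asymE_eq_mul_asymFlux hp₀ hp.ne', asymFlux_mul_of_nonneg hr.le,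
    Real.rpow_sub_one hr.ne', Real.rpow_sub_one hut.ne', Real.rpow_sub_one hvt.ne',
    Real.div_rpow hut.le hvt.le, Pi.sub_apply, Pi.mul_apply, Pi.neg_apply]
  field_simp
  ring

lemma piconeFun_zero (hu : IsPosEigenfunction p a b L l u u') :
    piconeFun p a b u u' v v' 0 = 0 := by
  rw [piconeFun, hu.apply_zero, zero_mul]

lemma piconeFun_right (hu : IsPosEigenfunction p a b L l u u') :
    piconeFun p a b u u' v v' L = 0 := by
  rw [piconeFun, hu.apply_right, zero_mul]

lemma IsPosEigenfunction.eigenvalue_le (hp : 1 < p) (ha : 0 < a) (hb : 0 < b) (hL : 0 < L)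
    (hu : IsPosEigenfunction p a b L l u u') (hv : IsPosEigenfunction p a b L μ v v') :
    μ ≤ l := by
  by_contra! hlμ
  have strictMono : StrictMonoOn (piconeFun p a b u u' v v') (Icc 0 L) := by
    refine strictMonoOn_of_hasDerivWithinAt_pos (convex_Icc 0 L)
      (continuousOn_piconeFun hp ha hb hL hu hv)
      (f' := fun t => asymBregman p a b (u' t) (u t / v t * v' t) + (μ - l) * u t ^ p) ?_ ?_ <;>
      rw [interior_Icc]
    · exact fun t ht => (hasDerivAt_piconeFun hp hL hu hv ht).hasDerivWithinAt
    · exact fun t ht => add_pos_of_nonneg_of_pos (asymBregman_nonneg hp ha hb)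
        (mul_pos (sub_pos.2 hlμ) (Real.rpow_pos_of_pos (hu.pos t ht) p))
  have := strictMono (left_mem_Icc.2 hL.le) (right_mem_Icc.2 hL.le) hL
  rw [piconeFun_zero hu, piconeFun_right hu] at this
  exact this.false

lemma piconeFun_eq_zero (hp : 1 < p) (ha : 0 < a) (hb : 0 < b) (hL : 0 < L)
    (hu : IsPosEigenfunction p a b L l u u') (hv : IsPosEigenfunction p a b L l v v') :
    ∀ t ∈ Icc 0 L, piconeFun p a b u u' v v' t = 0 := by
  have mono : MonotoneOn (piconeFun p a b u u' v v') (Icc 0 L) := by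
    refine monotoneOn_of_hasDerivWithinAt_nonneg (convex_Icc 0 L)
      (continuousOn_piconeFun hp ha hb hL hu hv)
      (f' := fun t => asymBregman p a b (u' t) (u t / v t * v' t)) ?_
      fun t _ => asymBregman_nonneg hp ha hb
    rw [interior_Icc]
    intro t ht
    have := hasDerivAt_piconeFun hp hL hu hv ht
    rw [sub_self, zero_mul, add_zero] at this
    exact this.hasDerivWithinAt
  intro t ht
  refine le_antisymm ?_ ?_
  · exact (mono ht (right_mem_Icc.2 hL.le) ht.2).trans_eq (piconeFun_right hu)
  · exact (piconeFun_zero hu).symm.trans_le (mono (left_mem_Icc.2 hL.le) ht ht.1)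

lemma IsPosEigenfunction.eqOn_logDeriv (hp : 1 < p) (ha : 0 < a) (hb : 0 < b) (hL : 0 < L)
    (hu : IsPosEigenfunction p a b L l u u') (hv : IsPosEigenfunction p a b L l v v') :
    EqOn (logDeriv u) (logDeriv v) (Ioo 0 L) := by
  intro t ht
  have hut := (hu.pos t ht).ne'
  have flux_eq : asymFlux p a b (u' t) = asymFlux p a b (u t / v t * v' t) :=
    sub_eq_zero.1 <| (mul_eq_zero.1 <|
      piconeFun_eq_zero hp ha hb hL hu hv t (Ioo_subset_Icc_self ht)).resolve_left hut
  have deriv_eq : u' t = u t / v t * v' t := (strictMono_asymFlux hp ha hb).injective flux_eq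
  rw [logDeriv_apply, logDeriv_apply, (hu.c1On.hasDerivAt ht).deriv,
    (hv.c1On.hasDerivAt ht).deriv, deriv_eq]
  field_simp

lemma IsPosEigenfunction.exists_eq_const_mul (hp : 1 < p) (ha : 0 < a) (hb : 0 < b) (hL : 0 < L)
    (hu : IsPosEigenfunction p a b L l u u') (hv : IsPosEigenfunction p a b L l v v') :
    ∃ c, 0 < c ∧ ∀ t ∈ Icc 0 L, v t = c * u t := by
  obtain ⟨c, -, hc⟩ := (logDeriv_eqOn_iff
    (fun t ht => (hv.c1On.hasDerivAt ht).differentiableAt.differentiableWithinAt)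
    (fun t ht => (hu.c1On.hasDerivAt ht).differentiableAt.differentiableWithinAt)
    isOpen_Ioo isPreconnected_Ioo (fun t ht => (hu.pos t ht).ne')
    (fun t ht => (hv.pos t ht).ne')).1 (hv.eqOn_logDeriv hp ha hb hL hu)
  have v_eq : ∀ t ∈ Ioo 0 L, v t = c * u t := fun t ht => hc ht
  have hmid : L / 2 ∈ Ioo 0 L := ⟨half_pos hL, half_lt_self hL⟩
  refine ⟨c, pos_of_mul_pos_left (v_eq _ hmid ▸ hv.pos _ hmid) (hu.pos _ hmid).le, fun t ht => ?_⟩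
  rcases ht.1.eq_or_lt with rfl | ht0
  · rw [hu.apply_zero, hv.apply_zero, mul_zero]
  rcases ht.2.eq_or_lt with rfl | htL
  · rw [hu.apply_right, hv.apply_right, mul_zero]
  exact v_eq t ⟨ht0, htL⟩

end Picone

theorem stmt4_general {p a b L l μ : ℝ} (hp : 1 < p) (ha : 0 < a) (hb : 0 < b) (hL : 0 < L)
    {u u' v v' : ℝ → ℝ} (hu : IsPosEigenfunction p a b L l u u')
    (hv : IsPosEigenfunction p a b L μ v v') :
    l = μ ∧ (∃ c : ℝ, 0 < c ∧ ∀ t ∈ Icc (0 : ℝ) L, v t = c * u t) ∧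
    ((∫ t in (0 : ℝ)..L, |u t| ^ p) = 1 → (∫ t in (0 : ℝ)..L, |v t| ^ p) = 1 →
      ∀ t ∈ Icc (0 : ℝ) L, u t = v t) := by
  obtain rfl : l = μ :=
    le_antisymm (hv.eigenvalue_le hp ha hb hL hu) (hu.eigenvalue_le hp ha hb hL hv)
  obtain ⟨c, hc, hvu⟩ := hu.exists_eq_const_mul hp ha hb hL hv
  refine ⟨rfl, ⟨c, hc, hvu⟩, fun hu_norm hv_norm t ht => ?_⟩
  have rpow_eq_one : c ^ p = 1 := by
    have := integral_abs_rpow_of_eq_const_mul (p := p) hc.le (uIcc_of_le hL.le ▸ hvu)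
    rw [hu_norm, hv_norm, mul_one] at this
    exact this.symm
  have c_eq_one : c = 1 := (Real.rpow_left_inj hc.le zero_le_one (one_pos.trans hp).ne').1
    (rpow_eq_one.trans (Real.one_rpow p).symm)
  rw [hvu t ht, c_eq_one, one_mul]

theorem stmt4 (p a b L : ℝ) (hp : 1 < p) (ha : 0 < a) (hb : 0 < b) (hL : 0 < L)
    (u u' v v' : ℝ → ℝ)
    (hu : IsWeakSol p a b L u u' (fun t => lam1 p a b L * |u t| ^ (p - 2) * u t))
    (hv : IsWeakSol p a b L v v' (fun t => lam1 p a b L * |v t| ^ (p - 2) * v t))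
    (hupos : ∀ t ∈ Set.Ioo (0:ℝ) L, 0 < u t)
    (hvpos : ∀ t ∈ Set.Ioo (0:ℝ) L, 0 < v t) :
    (∃ c : ℝ, 0 < c ∧ ∀ t ∈ Set.Icc (0:ℝ) L, v t = c * u t) ∧
    ((∫ t in (0:ℝ)..L, |u t| ^ p) = 1 → (∫ t in (0:ℝ)..L, |v t| ^ p) = 1 →
      ∀ t ∈ Set.Icc (0:ℝ) L, u t = v t) :=
  (stmt4_general hp ha hb hL ⟨hu, hupos⟩ ⟨hv, hvpos⟩).2
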